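/- Suppose I is a maximal ideal on ℕ (a proper ideal such that for every A ⊆ ℕ either A ∈ I or ℕ∖A ∈ I), (τ, d_τ) is a condition of ℙ(I), and D_n ⊆ ℙ(I) is dense for each n ∈ ℕ. Then there exist a condition (σ, d_σ) with σ ≤ τ, for each j ∈ ℕ a map ⃗g_j assigning to each ℓ ∈ d_σ⁻¹({j}) a function ⃗g_j(ℓ) : [0, j) → 2, and finite sets W_j of conditions, such that for every j: (1) W_{2j} ∪ W_{2j+1} ⊆ D_j; (2) |W_{2j}| ≤ 2^((j−1)·2j) (exponent read as 0 when j = 0) and |W_{2j+1}| ≤ 2^(j·(2j−1)); (3) W_{2j} ∪ W_{2j+1} is predense below the amalgamation σ[⋃_{i≤j} ⃗g_{2i}] and also below σ[⋃_{i<j} ⃗g_{2i+1}] (these finite amalgamations, taken with S the corresponding finite set of even/odd indices, are conditions of ℙ(I)); and furthermore either σ[⋃_{i∈ℕ} ⃗g_{2i}] is a condition of ℙ(I) with σ[⋃_{i∈ℕ} ⃗g_{2i}] ≤ τ, or σ[⋃_{i∈ℕ} ⃗g_{2i+1}] is a condition of ℙ(I) with σ[⋃_{i∈ℕ} ⃗g_{2i+1}]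 ≤ τ. -/

import Mathlib

/-- A condition is a pair `(σ, d)` with `σ : ℕ → ℕ → Bool` and `d : ℕ → ℕ`. -/
abbrev Cond : Type := (ℕ → ℕ → Bool) × (ℕ → ℕ)

/-- `I` is an ideal on ℕ: contains `∅`, closed under subsets and finite unions. -/
def IsIdeal (I : Set (Set ℕ)) : Prop :=
  ∅ ∈ I ∧ (∀ A B : Set ℕ, A ⊆ B → B ∈ I → A ∈ I) ∧
    (∀ A B : Set ℕ, A ∈ I → B ∈ I → A ∪ B ∈ I)

/-- `I` is a maximal (proper) ideal on ℕ. -/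
def IsMaximalIdeal (I : Set (Set ℕ)) : Prop :=
  IsIdeal I ∧ Set.univ ∉ I ∧ ∀ A : Set ℕ, A ∈ I ∨ (Set.univ \ A) ∈ I

/-- `(σ, d)` is a condition of `ℙ(I)`. -/
def IsCondition (I : Set (Set ℕ)) (σ : ℕ → ℕ → Bool) (d : ℕ → ℕ) : Prop :=
  (∀ n, d n ≤ n) ∧ (∀ n, {m | d m = n} ∈ I)

/-- The ordering on conditions of `ℙ(I)`. -/
def CondLe (σ : ℕ → ℕ → Bool) (dσ : ℕ → ℕ) (τ : ℕ → ℕ → Bool) (dτ : ℕ → ℕ) : Prop :=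
  (∀ n, dσ n ≤ dτ n ∧ ∀ i, dτ n ≤ i → i < n → σ n i = τ n i) ∧
  (∃ e : ℕ → ℕ, (∀ n, e n ≤ n) ∧ ∀ n, dσ n = e (dτ n)) ∧
  (∀ n m, dτ n = dτ m → ∀ i, dσ n ≤ i → i < dτ n → σ n i = σ m i)

/-- `D` is a dense set of conditions of `ℙ(I)`. -/
def IsDense (I : Set (Set ℕ)) (D : Set Cond) : Prop :=
  (∀ p ∈ D, IsCondition I p.1 p.2) ∧
  ∀ p : Cond, IsCondition I p.1 p.2 → ∃ q ∈ D, CondLe q.1 q.2 p.1 p.2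

/-- Two conditions are compatible if they have a common extension. -/
def Compatible (I : Set (Set ℕ)) (p q : Cond) : Prop :=
  ∃ r : Cond, IsCondition I r.1 r.2 ∧ CondLe r.1 r.2 p.1 p.2 ∧ CondLe r.1 r.2 q.1 q.2

/-- `W` is predense below the condition `p`. -/
def PredenseBelow (I : Set (Set ℕ)) (W : Set Cond) (p : Cond) : Prop :=
  ∀ q : Cond, IsCondition I q.1 q.2 → CondLe q.1 q.2 p.1 p.2 →
    ∃ w ∈ W, Compatible I q w

-- The amalgamation `σ[⃗g]` of a condition `(σ, dσ)` along `S ⊆ ℕ` with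
-- `⃗g` assigning to each `ℓ ∈ dσ⁻¹(S)` a function `⃗g ℓ : [0, dσ ℓ) → 2`.
open Classical in
noncomputable def amalg (σ : ℕ → ℕ → Bool) (dσ : ℕ → ℕ) (S : Set ℕ)
    (g : ℕ → ℕ → Bool) : Cond :=
  (fun ℓ i => if dσ ℓ ∈ S ∧ i < dσ ℓ then g ℓ i else σ ℓ i,
   fun ℓ => if dσ ℓ ∈ S then 0 else dσ ℓ)

/-- Fusion relation. -/
def FRel (a b : ℕ) (p' p : Cond) : Prop :=
  (∃ e : ℕ → ℕ, (∀ k, e k ≤ k) ∧ (∀ k, k < a → e k = k) ∧ (∀ k, a ≤ k → b ≤ e k) ∧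
    ∀ l, p'.2 l = e (p.2 l)) ∧
  (∀ l, p.2 l < a → ∀ i, p'.1 l i = p.1 l i) ∧
  (∀ l i, p.2 l ≤ i → i < l → p'.1 l i = p.1 l i) ∧
  (∀ l l' i, p.2 l = p.2 l' → a ≤ p.2 l → i < p.2 l → p'.1 l i = p'.1 l' i)

/-- Amalgamation of all classes up to `m`, with the classes of the wrong parity given by `s`. -/
def AA (m : ℕ) (s : ℕ → ℕ → Bool) (p : Cond) : Cond :=
  (fun l i => if p.2 l < m ∧ p.2 l % 2 ≠ m % 2 ∧ i < p.2 l then s (p.2 l) i else p.1 l i,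
   fun l => if p.2 l ≤ m then 0 else p.2 l)

theorem condLe_trans {r q p : Cond} (hp : ∀ n, p.2 n ≤ n)
    (h1 : CondLe r.1 r.2 q.1 q.2) (h2 : CondLe q.1 q.2 p.1 p.2) :
    CondLe r.1 r.2 p.1 p.2 := by
  obtain ⟨a1, ⟨e1, b1, c1⟩, d1⟩ := h1
  obtain ⟨a2, ⟨e2, b2, c2⟩, d2⟩ := h2
  refine ⟨fun n => ⟨(a1 n).1.trans (a2 n).1, fun i hi hin => ?_⟩,
    ⟨fun k => e1 (e2 k), fun k => (b1 _).trans (b2 _), fun n => ?_⟩, fun n m hnm i hi hin => ?_⟩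
  · rw [(a1 n).2 i ((a2 n).1.trans hi) hin, (a2 n).2 i hi hin]
  · rw [c1, c2]
  · have hq : q.2 n = q.2 m := by rw [c2, c2, hnm]
    by_cases h : i < q.2 n
    · exact d1 n m hq i hi h
    · push Not at h
      rw [(a1 n).2 i h (hin.trans_le (hp n)),
        (a1 m).2 i (hq ▸ h) ((hnm ▸ hin).trans_le (hp m))]
      exact d2 n m hnm i h hin

theorem FRel.comp {a b a' b' : ℕ} {p'' p' p : Cond} (hp : ∀ n, p.2 n ≤ n)
    (ha : a ≤ a') (hb : b ≤ b')
    (h1 : FRel a' b' p'' p') (h2 : FRel a b p' p) : FRel a b p'' p := by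
  obtain ⟨⟨e1, l1, u1, v1, w1⟩, x1, y1, z1⟩ := h1
  obtain ⟨⟨e2, l2, u2, v2, w2⟩, x2, y2, z2⟩ := h2
  refine ⟨⟨fun k => e1 (e2 k), fun k => (l1 _).trans (l2 _), fun k hk => ?_, fun k hk => ?_,
    fun l => ?_⟩, fun l hl i => ?_, fun l i hi hil => ?_, fun l l' i hll hl hi => ?_⟩
  · show e1 (e2 k) = k
    rw [u2 k hk, u1 k (by omega)]
  · show b ≤ e1 (e2 k)
    have := v2 k hk
    by_cases h : e2 k < a'
    · rw [u1 _ h]; exact this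
    · have := v1 (e2 k) (by omega)
      omega
  · rw [w1, w2]
  · have : p'.2 l = p.2 l := by rw [w2, u2 _ hl]
    rw [x1 l (by omega), x2 l hl]
  · have : p'.2 l ≤ p.2 l := by rw [w2]; exact l2 _
    rw [y1 l i (by omega) hil, y2 l i hi hil]
  · have hq : p'.2 l = p'.2 l' := by rw [w2, w2, hll]
    have hpl := hp l
    have hpl' := hp l'
    by_cases h : p'.2 l < a'
    · rw [x1 l h, x1 l' (hq ▸ h)]
      exact z2 l l' i hll hl hi
    · by_cases h' : i < p'.2 l
      · exact z1 l l' i hq (by omega) h'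
      · rw [y1 l i (by omega) (by omega), y1 l' i (by omega) (by omega)]
        exact z2 l l' i hll hl hi

theorem FRel.condLe {a b : ℕ} {p' p : Cond} (h : FRel a b p' p) :
    CondLe p'.1 p'.2 p.1 p.2 := by
  obtain ⟨⟨e, l1, u1, v1, w1⟩, x1, y1, z1⟩ := h
  refine ⟨fun n => ⟨w1 n ▸ l1 _, y1 n⟩, ⟨e, l1, w1⟩, fun n m hnm i hi hin => ?_⟩
  by_cases h : p.2 n < a
  · rw [w1, u1 _ h] at hi; omega
  · exact z1 n m i hnm (by omega) hin

theorem AA_mono {a b m : ℕ} {p' p : Cond} (ha : m + 1 ≤ a) (hb : m ≤ b)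
    (s : ℕ → ℕ → Bool) (h : FRel a b p' p) :
    CondLe (AA m s p').1 (AA m s p').2 (AA m s p).1 (AA m s p).2 := by
  obtain ⟨⟨e, l1, u1, v1, w1⟩, x1, y1, z1⟩ := h
  have hge : ∀ k, m < k → m ≤ e k := fun k hk => by
    by_cases h : k < a
    · rw [u1 k h]; omega
    · exact hb.trans (v1 k (by omega))
  refine ⟨fun n => ⟨?_, fun i hi hin => ?_⟩,
    ⟨fun k => if k ≤ m then 0 else if e k ≤ m then 0 else e k, fun k => ?_, fun n => ?_⟩,
    fun n n' hnn i hi hin => ?_⟩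
  · simp only [AA, w1]
    have := l1 (p.2 n)
    split_ifs <;> omega
  · simp only [AA] at hi ⊢
    by_cases h : p.2 n ≤ m
    · have : p'.2 n = p.2 n := by rw [w1, u1 _ (by omega)]
      rw [this, x1 n (by omega)]
    · have h2 := hge (p.2 n) (by omega)
      rw [← w1] at h2
      rw [if_neg (by omega), if_neg (by omega)]
      rw [if_neg h] at hi
      exact y1 n i hi hin
  · have := l1 k
    show (if k ≤ m then 0 else if e k ≤ m then 0 else e k) ≤ k
    split_ifs <;> omega
  · simp only [AA, w1]
    by_cases h : p.2 n ≤ m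
    · rw [u1 _ (by omega)]; simp [h]
    · simp [h]
  · simp only [AA] at hi hin hnn ⊢
    by_cases h : p.2 n ≤ m
    · simp [h] at hin
    · by_cases h3 : p.2 n' ≤ m
      · simp only [h, h3, if_true, if_false] at hnn; omega
      · simp only [h, h3, if_false] at hnn hin
        have h2 := hge (p.2 n) (by omega)
        have h4 := hge (p.2 n') (by omega)
        rw [← w1] at h2 h4
        rw [if_neg (by omega), if_neg (by omega)]
        by_cases h5 : p.2 n < a
        · rw [w1, u1 _ h5, if_neg h] at hi; omega
        · exact z1 n n' i hnn (by omega) hin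

theorem fib_le {I : Set (Set ℕ)} (hI : IsIdeal I) {d : ℕ → ℕ}
    (hd : ∀ n, {m | d m = n} ∈ I) (m : ℕ) : {l | d l ≤ m} ∈ I := by
  induction m with
  | zero => exact hI.2.1 _ _ (fun l hl => by simpa using hl) (hd 0)
  | succ m ih =>
    refine hI.2.1 _ _ (fun l hl => ?_) (hI.2.2 _ _ ih (hd (m+1)))
    simp only [Set.mem_setOf_eq, Set.mem_union] at hl ⊢
    omega

theorem cond_collapse {I : Set (Set ℕ)} (hI : IsIdeal I) {σ σ' : ℕ → ℕ → Bool} {d : ℕ → ℕ}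
    (hd : IsCondition I σ d) (S : Set ℕ) (hS : {l | d l = 0 ∨ d l ∈ S} ∈ I) (d' : ℕ → ℕ)
    (hd' : ∀ l, (d l ∈ S ∧ d' l = 0) ∨ d' l = d l) : IsCondition I σ' d' := by
  refine ⟨fun n => ?_, fun n => ?_⟩
  · have := hd.1 n
    rcases hd' n with h | h <;> omega
  · refine hI.2.1 _ _ (fun l hl => ?_) (hI.2.2 _ _ hS (hd.2 n))
    simp only [Set.mem_setOf_eq, Set.mem_union] at hl ⊢
    rcases hd' l with h | h
    · exact Or.inl (Or.inr h.1)
    · exact Or.inr (by omega)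

theorem cond_collapse_le {I : Set (Set ℕ)} (hI : IsIdeal I) {σ σ' : ℕ → ℕ → Bool} {d : ℕ → ℕ}
    (hd : IsCondition I σ d) (m : ℕ) (d' : ℕ → ℕ)
    (hd' : ∀ l, (d l ≤ m ∧ d' l = 0) ∨ d' l = d l) : IsCondition I σ' d' :=
  cond_collapse hI hd {k | k ≤ m}
    (hI.2.1 _ _ (fun l hl => by
      simp only [Set.mem_setOf_eq] at hl ⊢; omega) (fib_le hI hd.2 m)) d' hd'

theorem AA_cond {I : Set (Set ℕ)} (hI : IsIdeal I) {p : Cond}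
    (hp : IsCondition I p.1 p.2) (m : ℕ) (s : ℕ → ℕ → Bool) :
    IsCondition I (AA m s p).1 (AA m s p).2 :=
  cond_collapse_le hI hp m _ (fun l => by
    simp only [AA]; split_ifs with h
    · exact Or.inl ⟨h, rfl⟩
    · exact Or.inr rfl)

theorem step {I : Set (Set ℕ)} (hI : IsIdeal I) {D : Set Cond} (hD : IsDense I D)
    {p : Cond} (hp : IsCondition I p.1 p.2) (m : ℕ) (s : ℕ → ℕ → Bool) :
    ∃ w ∈ D, ∃ p' : Cond, IsCondition I p'.1 p'.2 ∧ FRel (m+1) m p' p ∧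
      CondLe (AA m s p').1 (AA m s p').2 w.1 w.2 := by
  obtain ⟨w, hwD, hw⟩ := hD.2 _ (AA_cond hI hp m s)
  have hwc := hD.1 w hwD
  obtain ⟨a1, ⟨e, b1, c1⟩, d1⟩ := hw
  -- facts about `w`
  have f0 : ∀ l, p.2 l ≤ m → w.2 l = 0 := fun l hl => by
    have := (a1 l).1
    simp only [AA, if_pos hl] at this
    omega
  have f1 : ∀ l, m < p.2 l → w.2 l = e (p.2 l) := fun l hl => by
    rw [c1]; simp only [AA]; rw [if_neg (by omega)]
  have g0 : ∀ l i, p.2 l ≤ m → i < l → (AA m s p).1 l i = w.1 l i := fun l i hl hi => by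
    refine ((a1 l).2 i ?_ hi).symm
    simp only [AA, if_pos hl]; omega
  have g1 : ∀ l i, m < p.2 l → p.2 l ≤ i → i < l → w.1 l i = p.1 l i := fun l i hl h hi => by
    rw [(a1 l).2 i ?_ hi]
    · simp only [AA]; rw [if_neg (by omega)]
    · simp only [AA]; rw [if_neg (by omega)]; exact h
  have h1 : ∀ n n' i, p.2 n = p.2 n' → m < p.2 n → w.2 n ≤ i → i < p.2 n →
      w.1 n i = w.1 n' i := fun n n' i hnn hm hi hin => by
    refine d1 n n' ?_ i hi ?_
    · simp only [AA, hnn]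
    · simp only [AA]; rw [if_neg (by omega)]; exact hin
  let p' : Cond := (fun l i => if p.2 l ≤ m then p.1 l i else if i < w.2 l then false else w.1 l i,
    fun l => if p.2 l ≤ m then p.2 l else max m (w.2 l))
  have q1 : ∀ l, p.2 l ≤ m → p'.2 l = p.2 l := fun l hl => if_pos hl
  have q2 : ∀ l, m < p.2 l → p'.2 l = max m (w.2 l) := fun l hl => if_neg (by omega)
  have r1 : ∀ l i, p.2 l ≤ m → p'.1 l i = p.1 l i := fun l i hl => if_pos hl
  have r2 : ∀ l i, m < p.2 l → p'.1 l i = if i < w.2 l then false else w.1 l i :=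
    fun l i hl => if_neg (by omega)
  clear_value p'
  refine ⟨w, hwD, p', ⟨fun n => ?_, fun n => ?_⟩, ?_, ?_⟩
  · by_cases h : p.2 n ≤ m
    · rw [q1 n h]; exact hp.1 n
    · have := hp.1 n
      have := hwc.1 n
      rw [q2 n (by omega)]; omega
  · refine hI.2.1 _ _ (fun l hl => ?_)
      (hI.2.2 _ _ (fib_le hI hp.2 m) (hI.2.2 _ _ (fib_le hI hwc.2 m) (hwc.2 n)))
    simp only [Set.mem_setOf_eq, Set.mem_union] at hl ⊢
    by_cases h : p.2 l ≤ m
    · exact Or.inl h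
    · rw [q2 l (by omega)] at hl; omega
  · refine ⟨⟨fun k => if k ≤ m then k else max m (e k), fun k => ?_, fun k hk => ?_,
      fun k hk => ?_, fun l => ?_⟩, fun l hl i => ?_, fun l i hi hil => ?_,
      fun l l' i hll hl hi => ?_⟩
    · have := b1 k
      show (if k ≤ m then k else max m (e k)) ≤ k
      split_ifs <;> omega
    · exact if_pos (by omega)
    · show m ≤ (if k ≤ m then k else max m (e k))
      split_ifs <;> omega
    · by_cases h : p.2 l ≤ m
      · rw [q1 l h]; exact (if_pos h).symm
      · rw [q2 l (by omega), f1 l (by omega)]; exact (if_neg h).symm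
    · exact r1 l i (by omega)
    · by_cases h : p.2 l ≤ m
      · exact r1 l i h
      · have : w.2 l ≤ p.2 l := by rw [f1 l (by omega)]; exact b1 _
        rw [r2 l i (by omega), if_neg (by omega)]
        exact g1 l i (by omega) hi hil
    · have : w.2 l = w.2 l' := by rw [f1 l (by omega), f1 l' (by omega), hll]
      rw [r2 l i (by omega), r2 l' i (by omega), this]
      split_ifs with h
      · rfl
      · exact h1 l l' i hll (by omega) (by omega) hi
  · have k1 : ∀ l, (AA m s p').2 l = if w.2 l ≤ m then 0 else w.2 l := fun l => by
      simp only [AA]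
      by_cases h : p.2 l ≤ m
      · rw [q1 l h, f0 l h]; simp [h]
      · rw [q2 l (by omega)]
        split_ifs <;> omega
    have k2 : ∀ l i, m < p.2 l → (AA m s p').1 l i = if i < w.2 l then false else w.1 l i :=
      fun l i hl => by
        have := q2 l hl
        rw [← r2 l i hl]
        simp only [AA]
        rw [if_neg (by omega)]
    refine ⟨fun n => ⟨?_, fun i hi hin => ?_⟩, ⟨fun k => if k ≤ m then 0 else k, fun k => ?_, k1⟩,
      fun n n' hnn i hi hin => ?_⟩
    · rw [k1]; split_ifs <;> omega
    · by_cases h : p.2 n ≤ m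
      · rw [← g0 n i h hin]
        simp only [AA]
        rw [q1 n h, r1 n i h]
      · rw [k2 n i (by omega), if_neg (by omega)]
    · show (if k ≤ m then 0 else k) ≤ k
      split_ifs <;> omega
    · rw [k1] at hi
      have hn : m < p.2 n := by
        by_contra h
        rw [f0 n (by omega)] at hin; omega
      have hn' : m < p.2 n' := by
        by_contra h
        rw [hnn, f0 n' (by omega)] at hin; omega
      rw [k2 n i hn, k2 n' i hn', if_pos hin, if_pos (hnn ▸ hin)]

theorem normalize_cond {I : Set (Set ℕ)} {p : Cond} (hp : IsCondition I p.1 p.2) (m : ℕ) :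
    ∃ p' : Cond, IsCondition I p'.1 p'.2 ∧ FRel m m p' p := by
  refine ⟨(fun l i => if m ≤ p.2 l ∧ i < p.2 l then false else p.1 l i, p.2), hp,
    ⟨id, fun k => le_rfl, fun k _ => rfl, fun k hk => hk, fun l => rfl⟩, fun l hl i => ?_,
    fun l i hi hil => ?_, fun l l' i hll hl hi => ?_⟩
  · exact if_neg (by omega)
  · exact if_neg (by omega)
  · show (if _ then _ else _) = (if _ then _ else _)
    rw [if_pos ⟨hl, hi⟩, if_pos (by omega)]

theorem stage_list {I : Set (Set ℕ)} (hI : IsIdeal I) {D : Set Cond} (hD : IsDense I D)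
    (m : ℕ) {p : Cond} (hp : IsCondition I p.1 p.2) (L : List (ℕ → ℕ → Bool)) :
    ∃ (p' : Cond) (W : List Cond), IsCondition I p'.1 p'.2 ∧ FRel m m p' p ∧
      W.length = L.length ∧ (∀ w ∈ W, w ∈ D) ∧
      ∀ s ∈ L, ∃ w ∈ W, CondLe (AA m s p').1 (AA m s p').2 w.1 w.2 := by
  induction L with
  | nil =>
    obtain ⟨p', h1, h2⟩ := normalize_cond hp m
    exact ⟨p', [], h1, h2, rfl, by simp, by simp⟩
  | cons s L ih =>
    obtain ⟨p', W, h1, h2, h3, h4, h5⟩ := ih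
    obtain ⟨w, hwD, p'', k1, k2, k3⟩ := step hI hD h1 m s
    refine ⟨p'', w :: W, k1, FRel.comp hp.1 (by omega) le_rfl k2 h2, by simp [h3], ?_, ?_⟩
    · intro x hx
      rcases List.mem_cons.1 hx with rfl | hx
      · exact hwD
      · exact h4 x hx
    · intro t ht
      rcases List.mem_cons.1 ht with rfl | ht
      · exact ⟨w, by simp, k3⟩
      · obtain ⟨x, hx, hx'⟩ := h5 t ht
        exact ⟨x, by simp [hx], condLe_trans (hD.1 x (h4 x hx)).1
          (AA_mono le_rfl le_rfl t k2) hx'⟩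

theorem stage {I : Set (Set ℕ)} (hI : IsIdeal I) {D : Set Cond} (hD : IsDense I D)
    (m : ℕ) {p : Cond} (hp : IsCondition I p.1 p.2) :
    ∃ (p' : Cond) (W : Set Cond), IsCondition I p'.1 p'.2 ∧ FRel m m p' p ∧
      W.Finite ∧ W.ncard ≤ 2 ^ ((m/2) * (m-1)) ∧ W ⊆ D ∧
      ∀ s, ∃ w ∈ W, CondLe (AA m s p').1 (AA m s p').2 w.1 w.2 := by
  classical
  let ext : (Fin (m/2) × Fin (m-1) → Bool) → ℕ → ℕ → Bool := fun f k i =>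
    if h : (k-1)/2 < m/2 ∧ i < m-1 then f (⟨(k-1)/2, h.1⟩, ⟨i, h.2⟩) else false
  let L : List (ℕ → ℕ → Bool) :=
    (Finset.univ : Finset (Fin (m/2) × Fin (m-1) → Bool)).toList.map ext
  obtain ⟨p', W, h1, h2, h3, h4, h5⟩ := stage_list hI hD m hp L
  refine ⟨p', {w | w ∈ W}, h1, h2, W.finite_toSet, ?_, h4, fun s => ?_⟩
  · have e1 : {w | w ∈ W} = (W.toFinset : Set Cond) := by ext; simp
    rw [e1, Set.ncard_coe_finset]
    refine (List.toFinset_card_le W).trans ?_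
    rw [h3]
    simp [L]
  · let f : Fin (m/2) × Fin (m-1) → Bool := fun x =>
      s (2 * x.1.1 + (if m % 2 = 0 then 1 else 2)) x.2.1
    obtain ⟨w, hw, hw'⟩ := h5 (ext f) (List.mem_map.2 ⟨f, by simp, rfl⟩)
    refine ⟨w, hw, ?_⟩
    have : AA m s p' = AA m (ext f) p' := by
      unfold AA
      congr 1
      funext l i
      split_ifs with h
      · have hk : (p'.2 l - 1)/2 < m/2 ∧ i < m - 1 := by omega
        simp only [ext, dif_pos hk, f]
        congr 1
        split_ifs <;> omega
      · rfl
    rw [this]; exact hw'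

theorem fusion {I : Set (Set ℕ)} (hI : IsIdeal I) (D : ℕ → Set Cond)
    (hD : ∀ n, IsDense I (D n)) (t : Cond) (ht : IsCondition I t.1 t.2) :
    ∃ (p : Cond) (W : ℕ → Set Cond), IsCondition I p.1 p.2 ∧ FRel 0 0 p t ∧
      ∀ m, (W m).Finite ∧ (W m).ncard ≤ 2 ^ ((m/2) * (m-1)) ∧ W m ⊆ D ((m+1)/2) ∧
        ∀ s, ∃ w ∈ W m, CondLe (AA m s p).1 (AA m s p).2 w.1 w.2 := by
  have H : ∀ (m : ℕ) (p : {p : Cond // IsCondition I p.1 p.2}),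
      ∃ (p' : {p : Cond // IsCondition I p.1 p.2}) (W : Set Cond), FRel m m p'.1 p.1 ∧
      W.Finite ∧ W.ncard ≤ 2 ^ ((m/2) * (m-1)) ∧ W ⊆ D ((m+1)/2) ∧
      ∀ s, ∃ w ∈ W, CondLe (AA m s p'.1).1 (AA m s p'.1).2 w.1 w.2 := by
    intro m p
    obtain ⟨p', W, h1, h2⟩ := stage hI (hD ((m+1)/2)) m p.2
    exact ⟨⟨p', h1⟩, W, h2⟩
  choose F V hF using H
  let P : ℕ → {p : Cond // IsCondition I p.1 p.2} := fun n => Nat.rec ⟨t, ht⟩ (fun m p => F m p) n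
  have P0 : (P 0).1 = t := rfl
  have PS : ∀ m, P (m+1) = F m (P m) := fun m => rfl
  clear_value P
  have R1 : ∀ m n, m + 1 ≤ n → FRel m m (P n).1 (P m).1 := by
    intro m n hn
    induction n, hn using Nat.le_induction with
    | base => rw [PS]; exact (hF m (P m)).1
    | succ n hn ih =>
      refine FRel.comp (P m).2.1 (a' := n) (b' := n) (by omega) (by omega) ?_ ih
      rw [PS]; exact (hF n (P n)).1
  -- stability
  have st : ∀ n n' l, n ≤ n' → (P n).1.2 l < n →
      (P n').1.2 l = (P n).1.2 l ∧ ∀ i, (P n').1.1 l i = (P n).1.1 l i := by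
    intro n n' l hnn hl
    rcases hnn.eq_or_lt with rfl | h
    · exact ⟨rfl, fun _ => rfl⟩
    · obtain ⟨⟨e, l1, u1, v1, w1⟩, x1, y1, z1⟩ := R1 n n' h
      exact ⟨by rw [w1, u1 _ hl], x1 l hl⟩
  let p : Cond := (fun l => (P (l+1)).1.1 l, fun l => (P (l+1)).1.2 l)
  have pst : ∀ n l, (P n).1.2 l < n →
      p.2 l = (P n).1.2 l ∧ ∀ i, p.1 l i = (P n).1.1 l i := by
    intro n l hl
    have h0 : (P (l+1)).1.2 l < l+1 := by have := (P (l+1)).2.1 l; omega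
    rcases le_total n (l+1) with h | h
    · exact st n (l+1) l h hl
    · have := st (l+1) n l h h0
      exact ⟨this.1.symm, fun i => (this.2 i).symm⟩
  clear_value p
  have R2 : ∀ m, FRel m m p (P m).1 := by
    intro m
    have Q : ∀ k, FRel m m (P (max m k + 1)).1 (P m).1 := fun k => R1 m _ (by omega)
    choose e he using fun k => (Q k).1
    have ag : ∀ l, p.2 l = (P (max m ((P m).1.2 l) + 1)).1.2 l ∧
        ∀ i, p.1 l i = (P (max m ((P m).1.2 l) + 1)).1.1 l i := by
      intro l
      apply pst
      have h1 := (he ((P m).1.2 l)).2.2.2 l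
      have h2 := (he ((P m).1.2 l)).1 ((P m).1.2 l)
      omega
    refine ⟨⟨fun k => e k k, fun k => (he k).1 k, fun k hk => (he k).2.1 k hk,
      fun k hk => (he k).2.2.1 k hk, fun l => ?_⟩, fun l hl i => ?_, fun l i hi hil => ?_,
      fun l l' i hll hl hi => ?_⟩
    · rw [(ag l).1]; exact (he _).2.2.2 l
    · rw [(ag l).2]; exact (Q _).2.1 l hl i
    · rw [(ag l).2]; exact (Q _).2.2.1 l i hi hil
    · rw [(ag l).2, (ag l').2, ← hll]; exact (Q _).2.2.2 l l' i hll hl hi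
  have pc : IsCondition I p.1 p.2 := by
    refine ⟨fun n => ?_, fun n => ?_⟩
    · have h1 := (R2 0).condLe.1 n
      have := (P 0).2.1 n
      omega
    · refine hI.2.1 _ _ (fun l hl => ?_) ((P (n+1)).2.2 n)
      obtain ⟨e, l1, u1, v1, w1⟩ := (R2 (n+1)).1
      simp only [Set.mem_setOf_eq] at hl ⊢
      rw [w1] at hl
      by_cases h : (P (n+1)).1.2 l < n + 1
      · rw [u1 _ h] at hl; exact hl
      · have := v1 _ (not_lt.1 h); omega
  refine ⟨p, fun m => V m (P m), pc, P0 ▸ R2 0, fun m => ?_⟩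
  obtain ⟨h1, h2, h3, h4, h5⟩ := hF m (P m)
  refine ⟨h2, h3, h4, fun s => ?_⟩
  obtain ⟨w, hw, hw'⟩ := h5 s
  rw [← PS] at hw'
  exact ⟨w, hw, condLe_trans ((hD _).1 w (h4 hw)).1
    (AA_mono le_rfl (by omega) s (R2 (m+1))) hw'⟩

theorem predense {I : Set (Set ℕ)} (hI : IsIdeal I) {p : Cond}
    (hp : IsCondition I p.1 p.2) (m : ℕ) (W : Set Cond)
    (hWc : ∀ w ∈ W, IsCondition I w.1 w.2)
    (hW : ∀ s, ∃ w ∈ W, CondLe (AA m s p).1 (AA m s p).2 w.1 w.2)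
    (B : Cond) (hB1 : B.1 = p.1)
    (hB2 : ∀ l, B.2 l = if p.2 l ≤ m ∧ p.2 l % 2 = m % 2 then 0 else p.2 l) :
    PredenseBelow I W B := by
  classical
  intro q hq hqB
  let r : Cond := (fun l i => if i < q.2 l then false else q.1 l i,
    fun l => if q.2 l ≤ m then 0 else q.2 l)
  have r1 : ∀ l i, r.1 l i = if i < q.2 l then false else q.1 l i := fun _ _ => rfl
  have r2 : ∀ l, r.2 l = if q.2 l ≤ m then 0 else q.2 l := fun _ => rfl
  clear_value r
  have rc : IsCondition I r.1 r.2 := cond_collapse_le hI hq m _ (fun l => by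
    rw [r2]; split_ifs with h
    · exact Or.inl ⟨h, rfl⟩
    · exact Or.inr rfl)
  have rq : CondLe r.1 r.2 q.1 q.2 := by
    refine ⟨fun n => ⟨?_, fun i hi hin => ?_⟩, ⟨fun k => if k ≤ m then 0 else k, fun k => ?_, r2⟩,
      fun n n' hnn i hi hin => ?_⟩
    · rw [r2]; split_ifs <;> omega
    · rw [r1, if_neg (by omega)]
    · show (if k ≤ m then 0 else k) ≤ k
      split_ifs <;> omega
    · rw [r1, r1, if_pos hin, if_pos (by omega)]
  have Bn : ∀ n, B.2 n ≤ n := fun n => by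
    have := hp.1 n
    rw [hB2]; split_ifs <;> omega
  have rB := condLe_trans Bn rq hqB
  have r0 : ∀ l, p.2 l ≤ m → r.2 l = 0 := fun l hl => by
    have := (hqB.1 l).1
    rw [r2, if_pos]
    rw [hB2] at this
    split_ifs at this <;> omega
  obtain ⟨a1, ⟨e, b1, c1⟩, d1⟩ := rB
  let s : ℕ → ℕ → Bool := fun k i => if h : ∃ l, p.2 l = k then r.1 h.choose i else false
  obtain ⟨w, hw, hw'⟩ := hW s
  refine ⟨w, hw, r, rc, rq, condLe_trans (hWc w hw).1 ?_ hw'⟩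
  refine ⟨fun n => ⟨?_, fun i hi hin => ?_⟩,
    ⟨fun k => if k ≤ m then 0 else e k, fun k => ?_, fun n => ?_⟩, fun n n' hnn i hi hin => ?_⟩
  · simp only [AA]
    split_ifs with h
    · rw [r0 n h]
    · have := (a1 n).1
      rw [hB2, if_neg (by omega)] at this; exact this
  · simp only [AA] at hi ⊢
    split_ifs with h
    · have hex : ∃ l, p.2 l = p.2 n := ⟨n, rfl⟩
      simp only [s, dif_pos hex]
      have hc := hex.choose_spec
      refine d1 n hex.choose ?_ i ?_ ?_
      · rw [hB2, hB2, hc]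
      · rw [r0 n (by omega)]; omega
      · rw [hB2, if_neg (by omega)]; omega
    · rw [(a1 n).2 i ?_ hin, hB1]
      rw [hB2]
      split_ifs at hi ⊢ <;> omega
  · have := b1 k
    show (if k ≤ m then 0 else e k) ≤ k
    split_ifs <;> omega
  · simp only [AA]
    by_cases h : p.2 n ≤ m
    · simp [h, r0 n h]
    · simp only [h, if_false]
      rw [c1, hB2, if_neg (by omega)]
  · simp only [AA] at hnn hin
    by_cases h : p.2 n ≤ m
    · simp [h] at hin
    · by_cases h' : p.2 n' ≤ m
      · simp only [h, h', if_true, if_false] at hnn; omega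
      · simp only [h, h', if_false] at hnn hin
        refine d1 n n' ?_ i hi ?_
        · rw [hB2, hB2, hnn]
        · rw [hB2, if_neg (by omega)]; exact hin

theorem PredenseBelow.mono {I : Set (Set ℕ)} {W W' : Set Cond} {B : Cond}
    (h : PredenseBelow I W B) (hW : W ⊆ W') : PredenseBelow I W' B := fun q hq hqB => by
  obtain ⟨w, hw, hc⟩ := h q hq hqB
  exact ⟨w, hW hw, hc⟩

theorem amalg_le {p t : Cond} (h : FRel 0 0 p t) (B : Cond) (hB1 : B.1 = p.1) (S : Set ℕ)
    [DecidablePred (· ∈ S)]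
    (hB2 : ∀ l, B.2 l = if p.2 l ∈ S then 0 else p.2 l) : CondLe B.1 B.2 t.1 t.2 := by
  obtain ⟨⟨e, l1, u1, v1, w1⟩, x1, y1, z1⟩ := h
  refine ⟨fun n => ⟨?_, fun i hi hin => ?_⟩,
    ⟨fun k => if e k ∈ S then 0 else e k, fun k => ?_, fun n => ?_⟩, fun n n' hnn i hi hin => ?_⟩
  · have := l1 (t.2 n)
    rw [hB2, w1]; split_ifs <;> omega
  · rw [hB1]; exact y1 n i hi hin
  · have := l1 k
    show (if e k ∈ S then 0 else e k) ≤ k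
    split_ifs <;> omega
  · rw [hB2, w1]
  · rw [hB1]; exact z1 n n' i hnn (Nat.zero_le _) hin

/-- Main fusion-amalgamation lemma (Lemma 2.7) for a maximal ideal `I`:
given a condition `τ` and dense sets `Dₙ`, there are `σ ≤ τ`, maps
`⃗g_j : dσ⁻¹{j} → 2^j` and finite sets `W_j` of conditions such that
`W_{2j} ∪ W_{2j+1} ⊆ D_j` with the stated cardinality bounds, `W_{2j} ∪ W_{2j+1}`
is predense below the finite even and odd amalgamations, and either the full even
amalgamation or the full odd amalgamation is a condition extending `τ`. -/
theorem fusion_amalg (I : Set (Set ℕ)) (hI : IsMaximalIdeal I)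
    (τ : ℕ → ℕ → Bool) (dτ : ℕ → ℕ) (hτ : IsCondition I τ dτ)
    (D : ℕ → Set Cond) (hD : ∀ n, IsDense I (D n)) :
    ∃ (σ : ℕ → ℕ → Bool) (dσ : ℕ → ℕ) (g : ℕ → ℕ → ℕ → Bool) (W : ℕ → Set Cond),
      IsCondition I σ dσ ∧ CondLe σ dσ τ dτ ∧
      (∀ j, W (2*j) ∪ W (2*j+1) ⊆ D j) ∧
      (∀ j, (W (2*j)).Finite ∧ (W (2*j)).ncard ≤ 2 ^ ((j-1)*(2*j))) ∧
      (∀ j, (W (2*j+1)).Finite ∧ (W (2*j+1)).ncard ≤ 2 ^ (j*(2*j-1))) ∧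
      (∀ j,
        IsCondition I
          (amalg σ dσ {s | ∃ i ≤ j, s = 2*i} (fun ℓ i => g (dσ ℓ) ℓ i)).1
          (amalg σ dσ {s | ∃ i ≤ j, s = 2*i} (fun ℓ i => g (dσ ℓ) ℓ i)).2 ∧
        IsCondition I
          (amalg σ dσ {s | ∃ i < j, s = 2*i+1} (fun ℓ i => g (dσ ℓ) ℓ i)).1
          (amalg σ dσ {s | ∃ i < j, s = 2*i+1} (fun ℓ i => g (dσ ℓ) ℓ i)).2 ∧
        PredenseBelow I (W (2*j) ∪ W (2*j+1))
          (amalg σ dσ {s | ∃ i ≤ j, s = 2*i} (fun ℓ i => g (dσ ℓ) ℓ i)) ∧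
        PredenseBelow I (W (2*j) ∪ W (2*j+1))
          (amalg σ dσ {s | ∃ i < j, s = 2*i+1} (fun ℓ i => g (dσ ℓ) ℓ i))) ∧
      ((IsCondition I
          (amalg σ dσ {s | ∃ i, s = 2*i} (fun ℓ i => g (dσ ℓ) ℓ i)).1
          (amalg σ dσ {s | ∃ i, s = 2*i} (fun ℓ i => g (dσ ℓ) ℓ i)).2 ∧
        CondLe
          (amalg σ dσ {s | ∃ i, s = 2*i} (fun ℓ i => g (dσ ℓ) ℓ i)).1
          (amalg σ dσ {s | ∃ i, s = 2*i} (fun ℓ i => g (dσ ℓ) ℓ i)).2 τ dτ) ∨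
       (IsCondition I
          (amalg σ dσ {s | ∃ i, s = 2*i+1} (fun ℓ i => g (dσ ℓ) ℓ i)).1
          (amalg σ dσ {s | ∃ i, s = 2*i+1} (fun ℓ i => g (dσ ℓ) ℓ i)).2 ∧
        CondLe
          (amalg σ dσ {s | ∃ i, s = 2*i+1} (fun ℓ i => g (dσ ℓ) ℓ i)).1
          (amalg σ dσ {s | ∃ i, s = 2*i+1} (fun ℓ i => g (dσ ℓ) ℓ i)).2 τ dτ)) := by
  classical
  obtain ⟨p, V, hp, hR, hV⟩ := fusion hI.1 D hD (τ, dτ) hτ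
  have hA1 : ∀ S, (amalg p.1 p.2 S (fun ℓ i => p.1 ℓ i)).1 = p.1 := fun S => by
    simp [amalg]
  have hA2 : ∀ S l, (amalg p.1 p.2 S (fun ℓ i => p.1 ℓ i)).2 l = if p.2 l ∈ S then 0 else p.2 l :=
    fun S l => by simp only [amalg]
  have hpre : ∀ m S, (∀ k, k ≠ 0 → (k ∈ S ↔ k ≤ m ∧ k % 2 = m % 2)) →
      PredenseBelow I (V m) (amalg p.1 p.2 S (fun ℓ i => p.1 ℓ i)) := by
    intro m S hS
    refine predense hI.1 hp m (V m) (fun w hw => (hD _).1 w ((hV m).2.2.1 hw)) (hV m).2.2.2 _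
      (hA1 S) (fun l => ?_)
    rw [hA2]
    by_cases h0 : p.2 l = 0
    · simp [h0]
    · simp only [hS _ h0]
  have hcon : ∀ S : Set ℕ, {l | p.2 l = 0 ∨ p.2 l ∈ S} ∈ I →
      IsCondition I (amalg p.1 p.2 S (fun ℓ i => p.1 ℓ i)).1
        (amalg p.1 p.2 S (fun ℓ i => p.1 ℓ i)).2 := by
    intro S hS
    refine cond_collapse hI.1 hp S hS _ (fun l => ?_)
    rw [hA2]
    split_ifs with h
    · exact Or.inl ⟨h, rfl⟩
    · exact Or.inr rfl
  have hconf : ∀ (S : Set ℕ) (m : ℕ), (∀ k ∈ S, k ≤ m) →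
      IsCondition I (amalg p.1 p.2 S (fun ℓ i => p.1 ℓ i)).1
        (amalg p.1 p.2 S (fun ℓ i => p.1 ℓ i)).2 := by
    intro S m hS
    refine hcon S (hI.1.2.1 _ _ (fun l hl => ?_) (fib_le hI.1 hp.2 m))
    rcases hl with hl | hl
    · show p.2 l ≤ m
      omega
    · exact hS _ hl
  let W : ℕ → Set Cond := fun n => if n = 0 then ∅ else V (n - 1)
  have W0 : W 0 = ∅ := rfl
  have W1 : ∀ n, W (n+1) = V n := fun n => by simp [W]
  clear_value W
  refine ⟨p.1, p.2, fun _ ℓ i => p.1 ℓ i, W, hp, hR.condLe, fun j => ?_, fun j => ?_, fun j => ?_,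
    fun j => ⟨?_, ?_, ?_, ?_⟩, ?_⟩
  · rw [W1]
    apply Set.union_subset
    · rcases j with _ | j
      · rw [Nat.mul_zero, W0]; exact Set.empty_subset _
      · rw [show 2 * (j+1) = (2*j+1) + 1 by ring, W1]
        have := (hV (2*j+1)).2.2.1
        rwa [show (2*j+1+1)/2 = j+1 by omega] at this
    · have := (hV (2*j)).2.2.1
      rwa [show (2*j+1)/2 = j by omega] at this
  · rcases j with _ | j
    · rw [Nat.mul_zero, W0]; simp
    · rw [show W (2 * (j+1)) = V (2*j+1) by rw [← W1]; rfl]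
      refine ⟨(hV _).1, (hV _).2.1.trans (Nat.pow_le_pow_right (by norm_num) ?_)⟩
      apply Nat.mul_le_mul <;> omega
  · rw [W1]
    refine ⟨(hV _).1, (hV _).2.1.trans (Nat.pow_le_pow_right (by norm_num) ?_)⟩
    apply Nat.mul_le_mul <;> omega
  · refine hconf _ (2*j) ?_
    rintro k ⟨i, hi, rfl⟩
    omega
  · refine hconf _ (2*j) ?_
    rintro k ⟨i, hi, rfl⟩
    omega
  · rw [W1]
    refine (hpre (2*j) _ (fun k hk => ?_)).mono Set.subset_union_right
    constructor
    · rintro ⟨i, hi, rfl⟩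
      omega
    · rintro h
      exact ⟨k/2, by omega, by omega⟩
  · rcases j with _ | j
    · rw [W1]
      refine (hpre (2*0) _ (fun k hk => ?_)).mono Set.subset_union_right
      constructor
      · rintro ⟨i, hi, rfl⟩
        omega
      · rintro h
        omega
    · rw [show W (2 * (j+1)) = V (2*j+1) by rw [← W1]; rfl]
      refine (hpre (2*j+1) _ (fun k hk => ?_)).mono Set.subset_union_left
      constructor
      · rintro ⟨i, hi, rfl⟩
        omega
      · rintro h
        exact ⟨k/2, by omega, by omega⟩
  · have hle : ∀ S, CondLe (amalg p.1 p.2 S (fun ℓ i => p.1 ℓ i)).1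
        (amalg p.1 p.2 S (fun ℓ i => p.1 ℓ i)).2 τ dτ :=
      fun S => amalg_le hR _ (hA1 S) S (hA2 S)
    rcases hI.2.2 {l | p.2 l % 2 = 0} with h | h
    · refine Or.inl ⟨hcon _ (hI.1.2.1 _ _ (fun l hl => ?_) h), hle _⟩
      show p.2 l % 2 = 0
      rcases hl with hl | ⟨i, hi⟩ <;> omega
    · refine Or.inr ⟨hcon _ (hI.1.2.1 _ _ (fun l hl => ?_) (hI.1.2.2 _ _ (hp.2 0) h)), hle _⟩
      rcases hl with hl | ⟨i, hi⟩
      · exact Or.inl hl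
      · refine Or.inr ⟨trivial, ?_⟩
        show ¬ (p.2 l % 2 = 0)
        omega
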